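/- Let p and q be distinct primes, H a nontrivial finite abelian p-group with exp(H) = p^k, and m a positive integer. Then K(H ⊕ C_{q^m}) = k(H) + 1 − 1/q^m + 1/(p^k q^m). -/

import Mathlib

/-- The cross number `k(S)` of a sequence (finite multiset) `S` over an additive group:
the sum, with multiplicity, of the reciprocals of the orders of its elements. -/
noncomputable def crossNum {G : Type*} [AddCommGroup G] (S : Multiset G) : ℝ :=
  (S.map fun g => ((addOrderOf g : ℝ))⁻¹).sum

/-- `S` is zero-sum free: no nonempty sub-multiset of `S` has sum `0`. -/
def IsZeroSumFree {G : Type*} [AddCommGroup G] (S : Multiset G) : Prop :=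
  ∀ T : Multiset G, T ≤ S → T ≠ 0 → T.sum ≠ 0

/-- The little cross number `k(G)`: the maximal cross number of a zero-sum free
sequence over `G`. -/
noncomputable def littleK (G : Type*) [AddCommGroup G] : ℝ :=
  sSup {x : ℝ | ∃ S : Multiset G, IsZeroSumFree S ∧ crossNum S = x}

/-- `S` is a minimal zero-sum sequence: nonempty, sum zero, and no nonempty proper
sub-multiset has sum `0`. -/
def IsMinZeroSum {G : Type*} [AddCommGroup G] (S : Multiset G) : Prop :=
  S ≠ 0 ∧ S.sum = 0 ∧ ∀ T : Multiset G, T ≤ S → T ≠ 0 → T ≠ S → T.sum ≠ 0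

/-- The cross number `K(G)`: the maximal cross number of a minimal zero-sum
sequence over `G`. -/
noncomputable def bigK (G : Type*) [AddCommGroup G] : ℝ :=
  sSup {x : ℝ | ∃ S : Multiset G, IsMinZeroSum S ∧ crossNum S = x}

section Aux

theorem cn_zero {G : Type*} [AddCommGroup G] : crossNum (0 : Multiset G) = 0 := by
  simp [crossNum]

theorem cn_add {G : Type*} [AddCommGroup G] (S T : Multiset G) :
    crossNum (S + T) = crossNum S + crossNum T := by
  simp [crossNum]

theorem cn_cons {G : Type*} [AddCommGroup G] (g : G) (S : Multiset G) :
    crossNum (g ::ₘ S) = ((addOrderOf g : ℝ))⁻¹ + crossNum S := by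
  simp [crossNum]

theorem cn_replicate {G : Type*} [AddCommGroup G] (n : ℕ) (g : G) :
    crossNum (Multiset.replicate n g) = n * ((addOrderOf g : ℝ))⁻¹ := by
  simp [crossNum]

theorem zsf_mono {G : Type*} [AddCommGroup G] {S T : Multiset G} (h : T ≤ S)
    (hS : IsZeroSumFree S) : IsZeroSumFree T := fun W hW h0 => hS W (hW.trans h) h0

theorem zsf_zero {G : Type*} [AddCommGroup G] : IsZeroSumFree (0 : Multiset G) := by
  intro T hT h0
  exact absurd (Multiset.le_zero.mp hT) h0

theorem le_add_split {α : Type*} {T A B : Multiset α} (h : T ≤ A + B) :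
    ∃ T₁ T₂, T₁ ≤ A ∧ T₂ ≤ B ∧ T = T₁ + T₂ := by
  classical
  refine ⟨T ∩ A, T - A, Multiset.inter_le_right, ?_, ?_⟩
  · exact tsub_le_iff_left.mpr h
  · ext x
    simp only [Multiset.count_add, Multiset.count_inter, Multiset.count_sub]
    omega

theorem exists_lift_le {α β : Type*} (f : α → β) {S : Multiset α} {T : Multiset β}
    (h : T ≤ S.map f) : ∃ S', S' ≤ S ∧ S'.map f = T := by
  induction S using Multiset.induction_on generalizing T with
  | empty => exact ⟨0, le_rfl, by simpa using (Multiset.le_zero.mp (by simpa using h)).symm⟩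
  | cons a S ih =>
    rw [Multiset.map_cons, ← Multiset.singleton_add] at h
    obtain ⟨T₁, T₂, h1, h2, rfl⟩ := le_add_split h
    obtain ⟨S', hS', rfl⟩ := ih h2
    rcases Multiset.le_singleton.mp h1 with h | h
    · exact ⟨S', hS'.trans (Multiset.le_cons_self _ _), by simp [h]⟩
    · exact ⟨a ::ₘ S', (Multiset.cons_le_cons_iff _).mpr hS', by simp [h]⟩

/-- Cross numbers of zero-sum free sequences are bounded. -/
theorem bdd_little (G : Type*) [AddCommGroup G] [Finite G] :
    BddAbove {x : ℝ | ∃ S : Multiset G, IsZeroSumFree S ∧ crossNum S = x} := by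
  classical
  have := Fintype.ofFinite G
  refine ⟨(Fintype.card G : ℝ), ?_⟩
  rintro x ⟨S, hS, rfl⟩
  unfold crossNum
  rw [Finset.sum_multiset_map_count]
  calc ∑ g ∈ S.toFinset, S.count g • ((addOrderOf g : ℝ))⁻¹
      ≤ ∑ g ∈ S.toFinset, (1 : ℝ) := by
        apply Finset.sum_le_sum
        intro g _
        have hpos : 0 < addOrderOf g := addOrderOf_pos g
        have hlt : S.count g < addOrderOf g := by
          by_contra hcon
          push Not at hcon
          refine hS (Multiset.replicate (addOrderOf g) g)
            (Multiset.le_count_iff_replicate_le.mp hcon) ?_ ?_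
          · intro h
            have := congrArg Multiset.card h
            rw [Multiset.card_replicate, Multiset.card_zero] at this
            omega
          · simp [addOrderOf_nsmul_eq_zero]
        rw [nsmul_eq_mul, ← div_eq_mul_inv, div_le_one (by exact_mod_cast hpos)]
        exact_mod_cast hlt.le
    _ ≤ Fintype.card G := by
        simp only [Finset.sum_const, nsmul_eq_mul, mul_one]
        exact_mod_cast Finset.card_le_univ _

theorem le_little {G : Type*} [AddCommGroup G] [Finite G] {S : Multiset G}
    (hS : IsZeroSumFree S) : crossNum S ≤ littleK G :=
  le_csSup (bdd_little G) ⟨S, hS, rfl⟩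

theorem zsf_level {G : Type*} [AddCommGroup G] [Finite G] {p : ℕ} (hp : p.Prime) {k a : ℕ}
    (hk : AddMonoid.exponent G = p ^ k) (ha : a ≤ k) {S : Multiset G}
    (hS : IsZeroSumFree S) (hSa : ∀ g ∈ S, p ^ a • g = 0) :
    crossNum S ≤ littleK G - ((p : ℝ) ^ a)⁻¹ + ((p : ℝ) ^ k)⁻¹ := by
  obtain ⟨g, hg⟩ := AddMonoid.exists_addOrderOf_eq_exponent
    (AddMonoid.ExponentExists.of_finite (G := G))
  rw [hk] at hg
  have hp0 : (p : ℝ) ≠ 0 := by exact_mod_cast hp.ne_zero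
  have hpos : 0 < p ^ (k - a) := pow_pos hp.pos _
  have hz : IsZeroSumFree (S + Multiset.replicate (p ^ (k - a) - 1) g) := by
    intro T hT hT0 hsum
    obtain ⟨T₁, T₂, h1, h2, rfl⟩ := le_add_split hT
    obtain ⟨j, hj, rfl⟩ := Multiset.le_replicate_iff.mp h2
    have hT1 : p ^ a • T₁.sum = 0 := by
      have h7 : p ^ a • T₁.sum = (T₁.map fun x => p ^ a • x).sum := by
        rw [Multiset.sum_map_nsmul, Multiset.map_id']
      rw [h7]
      apply Multiset.sum_eq_zero
      intro x hx
      obtain ⟨y, hy, rfl⟩ := Multiset.mem_map.mp hx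
      exact hSa y (Multiset.mem_of_le h1 hy)
    have h3 : (p ^ a * j) • g = 0 := by
      have := congrArg (fun x => p ^ a • x) hsum
      simpa [smul_add, hT1, mul_smul] using this
    have h4 : p ^ a * p ^ (k - a) ∣ p ^ a * j := by
      rw [← pow_add, Nat.add_sub_cancel' ha, ← hg]
      exact addOrderOf_dvd_of_nsmul_eq_zero h3
    have h5 : p ^ (k - a) ∣ j := Nat.dvd_of_mul_dvd_mul_left (pow_pos hp.pos _) h4
    have h6 : j = 0 := by
      by_contra h
      have := Nat.le_of_dvd (Nat.pos_of_ne_zero h) h5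
      omega
    subst h6
    simp only [Multiset.replicate_zero, add_zero] at hsum hT0
    exact hS T₁ h1 hT0 hsum
  have := le_little hz
  rw [cn_add, cn_replicate, hg] at this
  have e : (((p ^ (k - a) - 1 : ℕ)) : ℝ) * (((p ^ k : ℕ) : ℝ))⁻¹
      = ((p : ℝ) ^ a)⁻¹ - ((p : ℝ) ^ k)⁻¹ := by
    rw [Nat.cast_sub hpos]
    obtain ⟨b, rfl⟩ := Nat.exists_eq_add_of_le ha
    push_cast
    rw [Nat.add_sub_cancel_left, pow_add]
    field_simp
  rw [e] at this
  linarith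

theorem mzs_erase {G : Type*} [AddCommGroup G] {g : G} {S : Multiset G}
    (h : IsMinZeroSum (g ::ₘ S)) : IsZeroSumFree S := by
  intro T hT h0
  refine h.2.2 T (hT.trans (Multiset.le_cons_self _ _)) h0 ?_
  rintro rfl
  have := Multiset.card_le_card hT
  simp at this

theorem mzs_le {G : Type*} [AddCommGroup G] [Finite G] {p : ℕ} (hp : p.Prime) {k : ℕ}
    (hk : AddMonoid.exponent G = p ^ k) {S : Multiset G}
    (hS : IsMinZeroSum S) : crossNum S ≤ littleK G + ((p : ℝ) ^ k)⁻¹ := by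
  classical
  obtain ⟨g, hgS, hmax⟩ := S.toFinset.exists_max_image addOrderOf
    (by simpa [Finset.nonempty_iff_ne_empty] using hS.1)
  have hord : ∀ x : G, ∃ a ≤ k, addOrderOf x = p ^ a := fun x =>
    (Nat.dvd_prime_pow hp).mp (hk ▸ AddMonoid.addOrder_dvd_exponent x)
  obtain ⟨a, hak, ha⟩ := hord g
  obtain ⟨S', rfl⟩ := Multiset.exists_cons_of_mem (Multiset.mem_toFinset.mp hgS)
  have := zsf_level hp hk hak (mzs_erase hS) (by
    intro x hx
    obtain ⟨b, _, hb⟩ := hord x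
    have h1 := hmax x (by simp [hx])
    rw [ha, hb] at h1
    have h2 : b ≤ a := (Nat.pow_le_pow_iff_right hp.one_lt).mp h1
    apply addOrderOf_dvd_iff_nsmul_eq_zero.mp
    rw [hb]
    exact pow_dvd_pow _ h2)
  rw [cn_cons, ha]
  push_cast
  linarith

/-- Expansion of the product in the group algebra. -/
theorem prod_expand {G : Type*} [AddCommGroup G] (R : Type*) [CommRing R] (S : Multiset G) :
    ∃ P : Multiset (Multiset G), (∀ T ∈ P, T ≠ 0 ∧ T ≤ S) ∧
    (S.map fun c => (1 - AddMonoidAlgebra.single c (1 : R) : AddMonoidAlgebra R G)).prod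
      = 1 + (P.map fun T => AddMonoidAlgebra.single T.sum ((-1 : R) ^ T.card)).sum := by
  induction S using Multiset.induction_on with
  | empty => exact ⟨0, by simp, by simp⟩
  | cons a S ih =>
    obtain ⟨P, hP, h⟩ := ih
    refine ⟨P + (0 ::ₘ P).map (fun T => a ::ₘ T), ?_, ?_⟩
    · intro T hT
      rcases Multiset.mem_add.mp hT with hT | hT
      · exact ⟨(hP T hT).1, (hP T hT).2.trans (Multiset.le_cons_self _ _)⟩
      · obtain ⟨T', hT', rfl⟩ := Multiset.mem_map.mp hT
        refine ⟨Multiset.cons_ne_zero, (Multiset.cons_le_cons_iff _).mpr ?_⟩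
        rcases Multiset.mem_cons.mp hT' with rfl | hT'
        · exact Multiset.zero_le _
        · exact (hP T' hT').2
    · have key : ∀ T : Multiset G,
          (AddMonoidAlgebra.single (a ::ₘ T).sum ((-1 : R) ^ (a ::ₘ T).card)
            : AddMonoidAlgebra R G)
          = - AddMonoidAlgebra.single a 1 * AddMonoidAlgebra.single T.sum ((-1 : R) ^ T.card) := by
        intro T
        rw [neg_mul, AddMonoidAlgebra.single_mul_single, Multiset.sum_cons, Multiset.card_cons,
          pow_succ, one_mul, mul_neg_one, AddMonoidAlgebra.single_neg]
      rw [Multiset.map_cons, Multiset.prod_cons, h, Multiset.map_add, Multiset.sum_add,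
        Multiset.map_map]
      simp only [Function.comp_def, key]
      rw [Multiset.sum_map_mul_left, Multiset.map_cons, Multiset.sum_cons, Multiset.sum_zero,
        Multiset.card_zero, pow_zero, ← AddMonoidAlgebra.one_def]
      ring

theorem coeff_zero_prod {G : Type*} [AddCommGroup G] (R : Type*) [CommRing R] {S : Multiset G}
    (hS : IsZeroSumFree S) :
    (S.map fun c => (1 - AddMonoidAlgebra.single c (1 : R) : AddMonoidAlgebra R G)).prod.coeff 0
      = 1 := by
  classical
  obtain ⟨P, hP, h⟩ := prod_expand R S
  have h0 : ∀ Q : Multiset (Multiset G), (∀ T ∈ Q, T ≠ 0 ∧ T ≤ S) →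
      ((Q.map fun T => (AddMonoidAlgebra.single T.sum ((-1 : R) ^ T.card)
        : AddMonoidAlgebra R G)).sum).coeff 0 = 0 := by
    intro Q
    induction Q using Multiset.induction_on with
    | empty => simp
    | cons T Q ih =>
      intro hQ
      have h1 := hQ T (Multiset.mem_cons_self _ _)
      have h2 := hS T h1.2 h1.1
      rw [Multiset.map_cons, Multiset.sum_cons, AddMonoidAlgebra.coeff_add, Finsupp.add_apply,
        ih (fun T' hT' => hQ T' (Multiset.mem_cons_of_mem hT')),
        AddMonoidAlgebra.coeff_single, Finsupp.single_apply, if_neg h2, add_zero]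
  rw [h, AddMonoidAlgebra.coeff_add, Finsupp.add_apply, h0 P hP, AddMonoidAlgebra.one_def,
    AddMonoidAlgebra.coeff_single, Finsupp.single_apply, if_pos rfl, add_zero]

abbrev GA (q n : ℕ) := AddMonoidAlgebra (ZMod q) (ZMod n)

theorem zsf_zmod {q m n : ℕ} (hq : q.Prime) (hn : n = q ^ m) {S : Multiset (ZMod n)}
    (hS : IsZeroSumFree S) : crossNum S ≤ 1 - ((q : ℝ) ^ m)⁻¹ := by
  classical
  have : Fact q.Prime := ⟨hq⟩
  have hnpos : 0 < n := hn ▸ pow_pos hq.pos m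
  have : NeZero n := ⟨hnpos.ne'⟩
  have : CharP (GA q n) q := by
    apply charP_of_injective_ringHom 
      (f := AddMonoidAlgebra.singleZeroRingHom (R := ZMod q) (M := ZMod n))
    intro a b h
    have h' := congrArg (fun y : GA q n => y.coeff 0) h
    simpa using h'
  obtain ⟨x, hx⟩ : ∃ x : GA q n, x = AddMonoidAlgebra.single 1 1 := ⟨_, rfl⟩
  have hxpow' : ∀ j : ℕ, (AddMonoidAlgebra.single (j : ZMod n) 1 : GA q n) = x ^ j := by
    intro j
    rw [hx, AddMonoidAlgebra.single_pow]
    simp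
  have hxpow : ∀ c : ZMod n, (AddMonoidAlgebra.single c 1 : GA q n) = x ^ c.val := by
    intro c
    rw [← hxpow', ZMod.natCast_zmod_val]
  have hxn : (1 - x) ^ n = 0 := by
    have h1 : (1 - x) ^ n = (1 - x) ^ (q ^ m) := congrArg _ hn
    have h2 : x ^ (q ^ m) = x ^ n := (congrArg _ hn).symm
    rw [h1, sub_pow_char_pow, h2, ← hxpow', ZMod.natCast_self, ← AddMonoidAlgebra.one_def]
    simp
  have hdiv : ∀ c : ZMod n, (1 - x) ^ (Nat.gcd n c.val) ∣
      (1 - AddMonoidAlgebra.single c 1 : GA q n) := by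
    intro c
    obtain ⟨j, _, hj⟩ := (Nat.dvd_prime_pow hq).mp ((Nat.gcd_dvd_left n c.val).trans hn.dvd)
    obtain ⟨u, hu⟩ := Nat.gcd_dvd_right n c.val
    rw [hj] at hu
    rw [hxpow, hj, hu, sub_pow_char_pow, one_pow, pow_mul]
    simpa using sub_dvd_pow_sub_pow (1 : GA q n) (x ^ q ^ j) u
  have hdivS : ∀ T : Multiset (ZMod n), (1 - x) ^ (T.map fun c => Nat.gcd n c.val).sum ∣
      (T.map fun c => (1 - AddMonoidAlgebra.single c 1 : GA q n)).prod := by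
    intro T
    induction T using Multiset.induction_on with
    | empty => simp
    | cons a T ih =>
      simp only [Multiset.map_cons, Multiset.sum_cons, Multiset.prod_cons, pow_add]
      exact mul_dvd_mul (hdiv a) ih
  have hlt : (S.map fun c => Nat.gcd n c.val).sum < n := by
    by_contra hcon
    push Not at hcon
    have h0 : (S.map fun c => (1 - AddMonoidAlgebra.single c 1 : GA q n)).prod = 0 := by
      have h1 := (pow_dvd_pow (1 - x) hcon).trans (hdivS S)
      rw [hxn] at h1
      exact zero_dvd_iff.mp h1
    have h1 := coeff_zero_prod (ZMod q) hS
    rw [h0] at h1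
    simp at h1
  have hcn : crossNum S = ((S.map fun c => Nat.gcd n c.val).sum : ℕ) * ((n : ℝ))⁻¹ := by
    unfold crossNum
    rw [Nat.cast_multiset_sum, Multiset.map_map, ← Multiset.sum_map_mul_right]
    congr 1
    apply Multiset.map_congr rfl
    intro c _
    have h1 : addOrderOf c = n / Nat.gcd n c.val := by
      conv_lhs => rw [← ZMod.natCast_zmod_val c]
      exact ZMod.addOrderOf_coe _ hnpos.ne'
    have hg : 0 < Nat.gcd n c.val := Nat.gcd_pos_of_pos_left _ hnpos
    rw [h1, Nat.cast_div (Nat.gcd_dvd_left _ _) (by exact_mod_cast hg.ne')]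
    simp [div_eq_mul_inv]
  rw [hcn]
  have hnr : (0 : ℝ) < n := by exact_mod_cast hnpos
  have e : ((q : ℝ) ^ m) = n := by rw [hn]; push_cast; rfl
  rw [e]
  have h2 : (((S.map fun c => Nat.gcd n c.val).sum : ℕ) : ℝ) ≤ n - 1 := by
    have : (S.map fun c => Nat.gcd n c.val).sum + 1 ≤ n := hlt
    have : (((S.map fun c => Nat.gcd n c.val).sum + 1 : ℕ) : ℝ) ≤ n := by exact_mod_cast this
    push_cast at this ⊢
    linarith
  calc _ ≤ ((n : ℝ) - 1) * (n : ℝ)⁻¹ := by gcongr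
    _ = _ := by field_simp

theorem exists_mzs {G : Type*} [AddCommGroup G] {S : Multiset G} (hS : ¬ IsZeroSumFree S) :
    ∃ T ≤ S, IsMinZeroSum T := by
  have hne : {T : Multiset G | T ≤ S ∧ T ≠ 0 ∧ T.sum = 0}.Nonempty := by
    unfold IsZeroSumFree at hS
    push Not at hS
    exact hS
  obtain ⟨T, ⟨h1, h2, h3⟩, hmin⟩ := (wellFounded_lt (α := Multiset G)).has_min _ hne
  refine ⟨T, h1, h2, h3, ?_⟩
  intro W hW h0 hne' hsum
  exact hmin W ⟨hW.trans h1, h0, hsum⟩ (lt_of_le_of_ne hW hne')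

theorem extraction {G C : Type*} [AddCommGroup C] (f : G → C)
    (h1 : ∀ S : Multiset C, IsMinZeroSum S → crossNum S ≤ 1) (U : Multiset G) :
    ∃ (Bs : Multiset (Multiset G)) (R : Multiset G), Bs.join + R = U ∧
      (∀ B ∈ Bs, IsMinZeroSum (B.map f)) ∧ IsZeroSumFree (R.map f) ∧
      crossNum (U.map f) ≤ Bs.card + crossNum (R.map f) := by
  induction U using Multiset.strongInductionOn with
  | ih U ih =>
    by_cases hU : IsZeroSumFree (U.map f)
    · exact ⟨0, U, by simp, by simp, hU, by simp⟩
    · obtain ⟨T, hT, hTm⟩ := exists_mzs hU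
      obtain ⟨B, hB, rfl⟩ := exists_lift_le f hT
      obtain ⟨U', rfl⟩ := Multiset.le_iff_exists_add.mp hB
      have hB0 : B ≠ 0 := by
        rintro rfl
        exact hTm.1 (by simp)
      obtain ⟨Bs, R, e, hm, hz, hc⟩ := ih U' (by
        refine lt_of_le_of_ne (Multiset.le_add_left _ _) ?_
        intro h
        exact hB0 (by simpa using h))
      refine ⟨B ::ₘ Bs, R, by rw [Multiset.join_cons, add_assoc, e], ?_, hz, ?_⟩
      · intro B' hB'
        rcases Multiset.mem_cons.mp hB' with rfl | h
        · exact hTm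
        · exact hm B' h
      · have := h1 _ hTm
        rw [Multiset.map_add, cn_add, Multiset.card_cons]
        push_cast
        linarith

theorem sum_blocks {H C : Type*} [AddCommGroup H] [AddCommGroup C] [Finite H]
    {p : ℕ} (hp : p.Prime) (a : ℕ) (Bs : Multiset (Multiset (H × C)))
    (hBs : ∀ B ∈ Bs, ∀ x ∈ B, p ^ a • x.1 = 0) :
    ((p : ℝ) ^ a)⁻¹ * Bs.card ≤ (Bs.map fun B => ((addOrderOf B.sum.1 : ℕ) : ℝ)⁻¹).sum := by
  induction Bs using Multiset.induction_on with
  | empty => simp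
  | cons B Bs ih =>
    have h1 := ih (fun B' hB' => hBs B' (Multiset.mem_cons_of_mem hB'))
    have h2 : p ^ a • B.sum.1 = 0 := by
      have h3 : ∀ D : Multiset (H × C), (∀ x ∈ D, p ^ a • x.1 = 0) → p ^ a • D.sum.1 = 0 := by
        intro D
        induction D using Multiset.induction_on with
        | empty => simp
        | cons y D ihD =>
          intro hD
          rw [Multiset.sum_cons, Prod.fst_add, smul_add, hD y (Multiset.mem_cons_self _ _),
            ihD (fun x hx => hD x (Multiset.mem_cons_of_mem hx)), add_zero]
      exact h3 B (hBs B (Multiset.mem_cons_self _ _))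
    have h4 : addOrderOf B.sum.1 ≤ p ^ a :=
      Nat.le_of_dvd (pow_pos hp.pos _) (addOrderOf_dvd_of_nsmul_eq_zero h2)
    have h5 : ((p : ℝ) ^ a)⁻¹ ≤ ((addOrderOf B.sum.1 : ℕ) : ℝ)⁻¹ := by
      apply inv_anti₀
      · exact_mod_cast addOrderOf_pos _
      · exact_mod_cast h4
    rw [Multiset.map_cons, Multiset.sum_cons, Multiset.card_cons]
    push_cast
    linarith

theorem cn_exact {H C : Type*} [AddCommGroup H] [AddCommGroup C]
    (hcop : ∀ x : H × C, addOrderOf x = addOrderOf x.1 * addOrderOf x.2) (N : ℕ)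
    (U : Multiset (H × C)) (hU : ∀ x ∈ U, addOrderOf x.1 = N) :
    crossNum U = (N : ℝ)⁻¹ * crossNum (U.map Prod.snd) := by
  unfold crossNum
  rw [Multiset.map_map, ← Multiset.sum_map_mul_left]
  congr 1
  apply Multiset.map_congr rfl
  intro x hx
  rw [hcop, hU x hx]
  push_cast
  rw [mul_inv]
  rfl

theorem greedy {H C : Type*} [AddCommGroup H] [AddCommGroup C] [Finite H]
    (hcop : ∀ x : H × C, addOrderOf x = addOrderOf x.1 * addOrderOf x.2)
    (κ : ℝ) (hκ : ∀ S : Multiset C, IsZeroSumFree S → crossNum S ≤ κ)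
    (h1 : ∀ S : Multiset C, IsMinZeroSum S → crossNum S ≤ 1)
    {p : ℕ} (hp : p.Prime) (a : ℕ) (U : Multiset (H × C)) (hU : ∀ x ∈ U, p ^ a • x.1 = 0) :
    ∃ (Bs : Multiset (Multiset (H × C))) (R : Multiset (H × C)), Bs.join + R = U ∧
      (∀ B ∈ Bs, IsMinZeroSum (B.map Prod.snd)) ∧ IsZeroSumFree (R.map Prod.snd) ∧
      crossNum U ≤ (Bs.map fun B => ((addOrderOf B.sum.1 : ℕ) : ℝ)⁻¹).sum
        + ((p : ℝ) ^ a)⁻¹ * crossNum (R.map Prod.snd) + κ * (1 - ((p : ℝ) ^ a)⁻¹) := by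
  classical
  induction a generalizing U with
  | zero =>
    obtain ⟨Bs, R, e, hm, hz, hc⟩ := extraction (Prod.snd : H × C → C) h1 U
    refine ⟨Bs, R, e, hm, hz, ?_⟩
    have h2 := sum_blocks hp 0 Bs (fun B hB x hx => hU x (by
      rw [← e]
      exact Multiset.mem_add.mpr (Or.inl (Multiset.mem_join.mpr ⟨B, hB, hx⟩))))
    have h3 := cn_exact hcop 1 U (fun x hx => by
      have := hU x hx
      simpa using this)
    simp only [pow_zero, inv_one, one_mul, Nat.cast_one] at h2 h3 ⊢
    linarith
  | succ a ih =>
    obtain ⟨Bs, R, e, hm, hz, hc⟩ := ih (U.filter fun x => p ^ a • x.1 = 0)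
      (fun x hx => (Multiset.mem_filter.mp hx).2)
    obtain ⟨Bs', R', e', hm', hz', hc'⟩ := extraction (Prod.snd : H × C → C) h1
      (R + U.filter fun x => ¬ p ^ a • x.1 = 0)
    have eU : U = U.filter (fun x => p ^ a • x.1 = 0) + U.filter (fun x => ¬ p ^ a • x.1 = 0) :=
      (Multiset.filter_add_not _ _).symm
    have eU' : (Bs + Bs').join + R' = U := by
      rw [Multiset.join_add, add_assoc, e', ← add_assoc, e, ← eU]
    refine ⟨Bs + Bs', R', eU', ?_, hz', ?_⟩
    · intro B hB
      rcases Multiset.mem_add.mp hB with h | h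
      · exact hm B h
      · exact hm' B h
    · have h2 := sum_blocks hp (a + 1) Bs' (fun B hB x hx => hU x (by
        rw [← eU']
        exact Multiset.mem_add.mpr (Or.inl (Multiset.mem_join.mpr
          ⟨B, Multiset.mem_add.mpr (Or.inr hB), hx⟩))))
      have h3 := cn_exact hcop (p ^ (a + 1)) (U.filter (fun x => ¬ p ^ a • x.1 = 0)) (fun x hx => by
        have hx' := Multiset.mem_filter.mp hx
        have : Fact p.Prime := ⟨hp⟩
        exact addOrderOf_eq_prime_pow hx'.2 (hU x hx'.1))
      have h4 := hκ _ hz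
      rw [eU, cn_add, h3, Multiset.map_add, Multiset.sum_add]
      rw [Multiset.map_add, cn_add] at hc'
      push_cast
      have hp1 : (1 : ℝ) < p := by exact_mod_cast hp.one_lt
      set u := ((p : ℝ) ^ a)⁻¹ with hu
      set v := ((p : ℝ) ^ (a + 1))⁻¹ with hv
      have hv0 : 0 < v := by positivity
      have huv : v ≤ u := by
        apply inv_anti₀ (by positivity)
        exact pow_le_pow_right₀ hp1.le (Nat.le_succ a)
      have h5 := mul_le_mul_of_nonneg_left hc' hv0.le
      have h6 := mul_le_mul_of_nonneg_left h4 (sub_nonneg.mpr huv)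
      nlinarith

theorem min_blocks {H C : Type*} [AddCommGroup H] [AddCommGroup C]
    (Bs : Multiset (Multiset (H × C))) (hm : ∀ B ∈ Bs, IsMinZeroSum (B.map Prod.snd))
    (hU : IsMinZeroSum Bs.join) : IsMinZeroSum (Bs.map fun B => B.sum.1) := by
  have hsum : ∀ Ds : Multiset (Multiset (H × C)),
      Ds.join.sum.1 = (Ds.map fun B => B.sum.1).sum := by
    intro Ds
    induction Ds using Multiset.induction_on with
    | empty => simp
    | cons B Ds ih =>
      rw [Multiset.join_cons, Multiset.sum_add, Prod.fst_add, ih, Multiset.map_cons,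
        Multiset.sum_cons]
  have hsnd : ∀ Ds : Multiset (Multiset (H × C)), (∀ B ∈ Ds, IsMinZeroSum (B.map Prod.snd)) →
      Ds.join.sum.2 = 0 := by
    intro Ds
    induction Ds using Multiset.induction_on with
    | empty => simp
    | cons B Ds ih =>
      intro h
      have h1 := (h B (Multiset.mem_cons_self _ _)).2.1
      have h2 : B.sum.2 = (B.map Prod.snd).sum := map_multiset_sum (AddMonoidHom.snd H C) B
      rw [Multiset.join_cons, Multiset.sum_add, Prod.snd_add,
        ih (fun B' hB' => h B' (Multiset.mem_cons_of_mem hB')), h2, h1, add_zero]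
  have hne : ∀ Ds : Multiset (Multiset (H × C)), (∀ B ∈ Ds, IsMinZeroSum (B.map Prod.snd)) →
      Ds ≠ 0 → Ds.join ≠ 0 := by
    intro Ds h h0 hj
    obtain ⟨B, hB⟩ := Multiset.exists_mem_of_ne_zero h0
    obtain ⟨Ds', rfl⟩ := Multiset.exists_cons_of_mem hB
    have h1 := (h B hB).1
    rw [Multiset.join_cons, add_eq_zero] at hj
    exact h1 (by simp [hj.1])
  refine ⟨?_, ?_, ?_⟩
  · intro h
    have : Bs = 0 := by simpa using h
    exact hU.1 (by simp [this])
  · rw [← hsum, hU.2.1]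
    rfl
  · intro W hW h0 hne' hs
    obtain ⟨Ds, hDs, rfl⟩ := exists_lift_le _ hW
    obtain ⟨Es, rfl⟩ := Multiset.le_iff_exists_add.mp hDs
    have hmD : ∀ B ∈ Ds, IsMinZeroSum (B.map Prod.snd) :=
      fun B hB => hm B (Multiset.mem_add.mpr (Or.inl hB))
    have hmE : ∀ B ∈ Es, IsMinZeroSum (B.map Prod.snd) :=
      fun B hB => hm B (Multiset.mem_add.mpr (Or.inr hB))
    refine hU.2.2 Ds.join ?_ (hne Ds hmD ?_) ?_ ?_
    · rw [Multiset.join_add]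
      exact Multiset.le_add_right _ _
    · rintro rfl
      simp at h0
    · intro h
      rw [Multiset.join_add] at h
      refine hne Es hmE ?_ (by simpa using h)
      rintro rfl
      simp at hne'
    · exact Prod.ext (by rw [hsum, hs]; rfl) (hsnd Ds hmD)

theorem addOrderOf_inl {H C : Type*} [AddCommGroup H] [AddCommGroup C] (h : H) :
    addOrderOf ((h, 0) : H × C) = addOrderOf h := by
  simp [Prod.addOrderOf]

theorem addOrderOf_inr {H C : Type*} [AddCommGroup H] [AddCommGroup C] (c : C) :
    addOrderOf ((0, c) : H × C) = addOrderOf c := by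
  simp [Prod.addOrderOf]

/-- The extremal construction. -/
theorem construction {H : Type*} [AddCommGroup H] (n : ℕ) (hn : 0 < n) {S : Multiset H}
    (hS : IsZeroSumFree S) :
    IsMinZeroSum ((-S.sum, (1 : ZMod n)) ::ₘ
      (S.map (fun h => (h, (0 : ZMod n))) + Multiset.replicate (n - 1) ((0 : H), (1 : ZMod n)))) := by
  set V := S.map (fun h => (h, (0 : ZMod n))) +
    Multiset.replicate (n - 1) ((0 : H), (1 : ZMod n)) with hV
  have hmap : ∀ D : Multiset H, (D.map (fun h => (h, (0 : ZMod n)))).sum = (D.sum, 0) := by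
    intro D
    exact (map_multiset_sum (AddMonoidHom.inl H (ZMod n)) D).symm
  have hVs : V.sum = (S.sum, -1) := by
    rw [hV, Multiset.sum_add, hmap, Multiset.sum_replicate, Prod.smul_mk, Prod.mk_add_mk]
    simp [Nat.cast_sub (show 1 ≤ n from hn)]
  have hVz : IsZeroSumFree V := by
    intro T hT h0 hs
    obtain ⟨T₁, T₂, h1, h2, rfl⟩ := le_add_split hT
    obtain ⟨j, hj, rfl⟩ := Multiset.le_replicate_iff.mp h2
    obtain ⟨D, hD, rfl⟩ := exists_lift_le _ h1
    rw [Multiset.sum_add, hmap, Multiset.sum_replicate, Prod.smul_mk, Prod.mk_add_mk] at hs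
    have e1 : D.sum = 0 := by simpa using congrArg Prod.fst hs
    have e2 : ((j : ℕ) : ZMod n) = 0 := by simpa using congrArg Prod.snd hs
    have hj0 : j = 0 := by
      rw [ZMod.natCast_eq_zero_iff] at e2
      by_contra h
      have := Nat.le_of_dvd (Nat.pos_of_ne_zero h) e2
      omega
    subst hj0
    refine hS D hD ?_ e1
    rintro rfl
    simp at h0
  have hsum : ((-S.sum, (1 : ZMod n)) ::ₘ V).sum = 0 := by
    rw [Multiset.sum_cons, hVs]
    simp
  refine ⟨Multiset.cons_ne_zero, hsum, ?_⟩
  intro T hT h0 hne hs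
  obtain ⟨W, hW⟩ := Multiset.le_iff_exists_add.mp hT
  have hW0 : W ≠ 0 := by
    rintro rfl
    exact hne (by simpa using hW.symm)
  have hWs : W.sum = 0 := by
    rw [hW, Multiset.sum_add, hs, zero_add] at hsum
    exact hsum
  have hmem : (-S.sum, (1 : ZMod n)) ∈ T + W := hW ▸ Multiset.mem_cons_self _ _
  rcases Multiset.mem_add.mp hmem with h | h
  · obtain ⟨T', rfl⟩ := Multiset.exists_cons_of_mem h
    rw [Multiset.cons_add, Multiset.cons_inj_right] at hW
    exact hVz W (hW ▸ Multiset.le_add_left _ _) hW0 hWs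
  · obtain ⟨W', rfl⟩ := Multiset.exists_cons_of_mem h
    rw [Multiset.add_cons, Multiset.cons_inj_right] at hW
    exact hVz T (hW ▸ Multiset.le_add_right _ _) h0 hs

end Aux

/-- For distinct primes `p, q`, a nontrivial finite abelian `p`-group `H` with
`exp(H) = p^k` and `m ≥ 1`: `K(H ⊕ C_{q^m}) = k(H) + 1 - 1/q^m + 1/(p^k q^m)`. -/
theorem bigK_pGroup_prod_zmod_q_pow
    (p q : ℕ) (hp : p.Prime) (hq : q.Prime) (hpq : p ≠ q)
    (H : Type*) [AddCommGroup H] [Finite H] [Nontrivial H]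
    (hH : ∃ n : ℕ, Nat.card H = p ^ n)
    (k : ℕ) (hk : AddMonoid.exponent H = p ^ k)
    (m : ℕ) (hm : 0 < m) :
    bigK (H × ZMod (q ^ m))
      = littleK H + 1 - ((q : ℝ) ^ m)⁻¹ + ((p : ℝ) ^ k * (q : ℝ) ^ m)⁻¹ := by
  have hn : 0 < q ^ m := pow_pos hq.pos m
  have : NeZero (q ^ m) := ⟨hn.ne'⟩
  have hp0 : (0 : ℝ) < (p : ℝ) ^ k := by
    have : (0 : ℝ) < p := by exact_mod_cast hp.pos
    positivity
  have hq0 : (0 : ℝ) < (q : ℝ) ^ m := by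
    have : (0 : ℝ) < q := by exact_mod_cast hq.pos
    positivity
  have hexp : AddMonoid.exponent (ZMod (q ^ m)) = q ^ m := ZMod.exponent _
  have hordH : ∀ h : H, addOrderOf h ∣ p ^ k := fun h => hk ▸ AddMonoid.addOrder_dvd_exponent h
  have hordC : ∀ c : ZMod (q ^ m), addOrderOf c ∣ q ^ m := fun c => by
    have := AddMonoid.addOrder_dvd_exponent c
    rwa [hexp] at this
  have hcop : ∀ x : H × ZMod (q ^ m), addOrderOf x = addOrderOf x.1 * addOrderOf x.2 := by
    intro x
    rw [Prod.addOrderOf]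
    apply Nat.Coprime.lcm_eq_mul
    exact Nat.Coprime.of_dvd (hordH _) (hordC _)
      (Nat.Coprime.pow _ _ ((Nat.coprime_primes hp hq).mpr hpq))
  have hκ : ∀ S : Multiset (ZMod (q ^ m)), IsZeroSumFree S →
      crossNum S ≤ 1 - ((q : ℝ) ^ m)⁻¹ := fun S hS => zsf_zmod hq rfl hS
  have h1 : ∀ S : Multiset (ZMod (q ^ m)), IsMinZeroSum S → crossNum S ≤ 1 := by
    intro S hS
    have h2 := mzs_le hq hexp hS
    have h3 : littleK (ZMod (q ^ m)) ≤ 1 - ((q : ℝ) ^ m)⁻¹ := by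
      unfold littleK
      refine csSup_le ⟨_, 0, zsf_zero, rfl⟩ ?_
      rintro x ⟨T, hT, rfl⟩
      exact hκ T hT
    linarith
  have upper : ∀ U : Multiset (H × ZMod (q ^ m)), IsMinZeroSum U → crossNum U ≤
      littleK H + 1 - ((q : ℝ) ^ m)⁻¹ + ((p : ℝ) ^ k * (q : ℝ) ^ m)⁻¹ := by
    intro U hU
    obtain ⟨Bs, R, e, hmB, hz, hc⟩ := greedy hcop _ hκ h1 hp k U (fun x _ =>
      addOrderOf_dvd_iff_nsmul_eq_zero.mp (hordH x.1))
    have hsnd : ∀ D : Multiset (H × ZMod (q ^ m)), (D.map Prod.snd).sum = D.sum.2 := fun D =>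
      (map_multiset_sum (AddMonoidHom.snd H (ZMod (q ^ m))) D).symm
    have hjoin : ∀ Ds : Multiset (Multiset (H × ZMod (q ^ m))),
        (∀ B ∈ Ds, IsMinZeroSum (B.map Prod.snd)) → (Ds.join.map Prod.snd).sum = 0 := by
      intro Ds
      induction Ds using Multiset.induction_on with
      | empty => simp
      | cons B Ds ih =>
        intro h
        rw [Multiset.join_cons, Multiset.map_add, Multiset.sum_add,
          (h B (Multiset.mem_cons_self _ _)).2.1,
          ih (fun B' hB' => h B' (Multiset.mem_cons_of_mem hB')), zero_add]
    have hR : R = 0 := by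
      by_contra hR
      refine hz (R.map Prod.snd) le_rfl (by simpa using hR) ?_
      have h2 := hsnd U
      rw [hU.2.1, ← e, Multiset.map_add, Multiset.sum_add, hjoin Bs hmB, zero_add] at h2
      exact h2
    subst hR
    rw [add_zero] at e
    subst e
    have h3 := mzs_le hp hk (min_blocks Bs hmB hU)
    have h4 : crossNum (Bs.map fun B => B.sum.1)
        = (Bs.map fun B => ((addOrderOf B.sum.1 : ℕ) : ℝ)⁻¹).sum := by
      unfold crossNum
      rw [Multiset.map_map]
      rfl
    rw [Multiset.map_zero, cn_zero, mul_zero, add_zero, ← h4] at hc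
    rw [mul_inv]
    nlinarith
  have lower : ∀ S : Multiset H, IsZeroSumFree S → ∃ U : Multiset (H × ZMod (q ^ m)),
      IsMinZeroSum U ∧ crossNum S + 1 - ((q : ℝ) ^ m)⁻¹ + ((p : ℝ) ^ k * (q : ℝ) ^ m)⁻¹
        ≤ crossNum U := by
    intro S hS
    refine ⟨_, construction (q ^ m) hn hS, ?_⟩
    have e1 : crossNum (S.map (fun h => (h, (0 : ZMod (q ^ m))))) = crossNum S := by
      unfold crossNum
      rw [Multiset.map_map]
      congr 1
      apply Multiset.map_congr rfl
      intro h _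
      simp only [Function.comp_apply, addOrderOf_inl]
    have e3 : addOrderOf (1 : ZMod (q ^ m)) = q ^ m := ZMod.addOrderOf_one _
    rw [cn_cons, cn_add, e1, cn_replicate, addOrderOf_inr, e3, hcop, e3]
    have e4 : ((q ^ m - 1 : ℕ) : ℝ) * ((q ^ m : ℕ) : ℝ)⁻¹ = 1 - ((q : ℝ) ^ m)⁻¹ := by
      rw [Nat.cast_sub hn]
      push_cast
      field_simp
    rw [e4]
    have e5 : ((p : ℝ) ^ k * (q : ℝ) ^ m)⁻¹
        ≤ ((addOrderOf (-S.sum) * q ^ m : ℕ) : ℝ)⁻¹ := by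
      apply inv_anti₀
      · exact_mod_cast Nat.mul_pos (addOrderOf_pos _) hn
      · exact_mod_cast Nat.mul_le_mul_right _
          (Nat.le_of_dvd (pow_pos hp.pos k) (hordH (-S.sum)))
    linarith
  have hbdd : BddAbove {x : ℝ | ∃ S : Multiset (H × ZMod (q ^ m)),
      IsMinZeroSum S ∧ crossNum S = x} := by
    refine ⟨littleK H + 1 - ((q : ℝ) ^ m)⁻¹ + ((p : ℝ) ^ k * (q : ℝ) ^ m)⁻¹, ?_⟩
    rintro x ⟨U, hU, rfl⟩
    exact upper U hU
  apply le_antisymm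
  · obtain ⟨U, hU, _⟩ := lower 0 zsf_zero
    unfold bigK
    refine csSup_le ⟨_, U, hU, rfl⟩ ?_
    rintro x ⟨U, hU, rfl⟩
    exact upper U hU
  · have h2 : littleK H ≤ bigK (H × ZMod (q ^ m)) - 1 + ((q : ℝ) ^ m)⁻¹
        - ((p : ℝ) ^ k * (q : ℝ) ^ m)⁻¹ := by
      unfold littleK
      refine csSup_le ⟨_, 0, zsf_zero, rfl⟩ ?_
      rintro x ⟨S, hS, rfl⟩
      obtain ⟨U, hU, hle⟩ := lower S hS
      have h3 : crossNum U ≤ bigK (H × ZMod (q ^ m)) := le_csSup hbdd ⟨U, hU, rfl⟩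
      linarith
    linarith
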